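/- arXiv:2003.01830 — 3 statements merged into one kernel-verified Lean document; each statement's English description precedes it below -/
import Mathlib

section
/- Suppose Σ_f is almost rational, and let s ∈ Σ_f be a proper cluster with d_s > ρ_s. Then |s| is a power of p. -/
open Polynomial
open scoped Classical

namespace ClusterPicture

variable {K Kbar : Type*} [Field K] [Field Kbar] [Algebra K Kbar]

lemma zero_lt_top' : (0 : WithTop ℚ) < ⊤ := by
  simp

lemma withTop_add_pos {a b : WithTop ℚ} (ha : 0 ≤ a) (hb : 0 < b) : 0 < a + b := by
  rcases eq_or_ne a ⊤ with h | h
  · subst h; rw [top_add]; exact zero_lt_top'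
  · lift a to ℚ using h
    rcases eq_or_ne b ⊤ with h' | h'
    · subst h'; rw [add_top]; exact zero_lt_top'
    · lift b to ℚ using h'
      have ha' : (0 : ℚ) ≤ a := by exact_mod_cast ha
      have hb' : (0 : ℚ) < b := by exact_mod_cast hb
      exact_mod_cast add_pos_of_nonneg_of_pos ha' hb'

/-- The setting of the paper: `K` is a complete discretely valued field, with valuation `v`
normalised so that `v(K^×) = ℤ`, `Kbar` is an algebraic closure of `K`, and `v` is (the unique)
extension of the valuation to a `ℚ ∪ {∞}`-valued valuation on `Kbar`. -/
structure Setup (K Kbar : Type*) [Field K] [Field Kbar] [Algebra K Kbar] : Type _ where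
  /-- the valuation on the algebraic closure -/
  v : Kbar → WithTop ℚ
  v_top_iff : ∀ x : Kbar, v x = ⊤ ↔ x = 0
  v_one : v 1 = 0
  v_neg : ∀ x : Kbar, v (-x) = v x
  v_mul : ∀ x y : Kbar, v (x * y) = v x + v y
  v_add : ∀ x y : Kbar, min (v x) (v y) ≤ v (x + y)
  /-- the valuation is normalised: nonzero elements of `K` have integer valuation -/
  v_base_int : ∀ x : K, x ≠ 0 → ∃ n : ℤ, v (algebraMap K Kbar x) = ((n : ℚ) : WithTop ℚ)
  /-- the valuation is surjective onto `ℤ` on `K^×`: there is a uniformiser -/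
  exists_uniformiser : ∃ π : K, v (algebraMap K Kbar π) = ((1 : ℚ) : WithTop ℚ)
  /-- `Kbar` is an algebraic closure of `K` -/
  algClosed : IsAlgClosed Kbar
  algebraic : Algebra.IsAlgebraic K Kbar
  /-- `K` is complete with respect to the valuation -/
  complete : ∀ a : ℕ → K,
    (∀ q : ℚ, ∃ N : ℕ, ∀ m, N ≤ m → ∀ n, N ≤ n →
      ((q : ℚ) : WithTop ℚ) ≤ v (algebraMap K Kbar (a m - a n))) →
    ∃ b : K, ∀ q : ℚ, ∃ N : ℕ, ∀ n, N ≤ n →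
      ((q : ℚ) : WithTop ℚ) ≤ v (algebraMap K Kbar (a n - b))

/-- Valuation of an element of the base field `K`. -/
def Setup.vK (S : Setup K Kbar) (x : K) : WithTop ℚ := S.v (algebraMap K Kbar x)

/-- The finite set of roots of `f` in the algebraic closure `Kbar`. -/
noncomputable def rootFinset (f : K[X]) : Finset Kbar :=
  (f.map (algebraMap K Kbar)).roots.toFinset

/-- A cluster for `f`: a nonempty subset of the set of roots of `f` cut out by a `v`-adic disc. -/
def IsCluster (S : Setup K Kbar) (f : K[X]) (s : Finset Kbar) : Prop :=
  s.Nonempty ∧ ∃ (z : Kbar) (δ : ℚ),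
    s = (rootFinset f).filter fun r => ((δ : ℚ) : WithTop ℚ) ≤ S.v (r - z)

/-- The depth `d_s = min_{r,r' ∈ s} v (r - r')` of a cluster. -/
noncomputable def depth (S : Setup K Kbar) (s : Finset Kbar) : WithTop ℚ :=
  s.inf fun r => s.inf fun r' => S.v (r - r')

/-- `min_{r ∈ s} v (r - z)`, for `z ∈ Kbar`. -/
noncomputable def dmin (S : Setup K Kbar) (s : Finset Kbar) (z : Kbar) : WithTop ℚ :=
  s.inf fun r => S.v (r - z)

/-- `min_{r ∈ s} v (r - w)`, for `w ∈ K`. -/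
noncomputable def dminK (S : Setup K Kbar) (s : Finset Kbar) (w : K) : WithTop ℚ :=
  dmin S s (algebraMap K Kbar w)

/-- `w ∈ K` is a rational centre of `s` if it maximises `min_{r ∈ s} v (r - w)`.
For a proper cluster `s` with rational centre `w`, the radius `ρ_s` is `dminK S s w`. -/
def IsRationalCentre (S : Setup K Kbar) (s : Finset Kbar) (w : K) : Prop :=
  ∀ w' : K, dminK S s w' ≤ dminK S s w

/-- A rational cluster: a cluster cut out by a disc with centre in `K`. -/
def IsRationalCluster (S : Setup K Kbar) (f : K[X]) (s : Finset Kbar) : Prop :=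
  s.Nonempty ∧ ∃ (w : K) (δ : ℚ),
    s = (rootFinset f).filter fun r => ((δ : ℚ) : WithTop ℚ) ≤ S.v (r - algebraMap K Kbar w)

/-- A cluster centred at `w ∈ K`. -/
def IsClusterCentredAt (S : Setup K Kbar) (f : K[X]) (w : K) (s : Finset Kbar) : Prop :=
  s.Nonempty ∧ ∃ δ : ℚ,
    s = (rootFinset f).filter fun r => ((δ : ℚ) : WithTop ℚ) ≤ S.v (r - algebraMap K Kbar w)

/-- The cluster picture of `f` is almost rational: every proper cluster `s` with
`|s| > |ρ_s|_p` satisfies `d_s = ρ_s`. -/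
def AlmostRational (S : Setup K Kbar) (f : K[X]) (p : ℕ) : Prop :=
  ∀ s : Finset Kbar, IsCluster S f s → 1 < s.card →
    ∀ (w : K) (ρ : ℚ), IsRationalCentre S s w → dminK S s w = ((ρ : ℚ) : WithTop ℚ) →
      padicNorm p ρ < (s.card : ℚ) → depth S s = ((ρ : ℚ) : WithTop ℚ)

/-- The slope of the `j`-th edge of the polygon with vertices `(i_j, c_j)`. -/
def NPslope {s : ℕ} (i : Fin (s + 1) → ℕ) (c : Fin (s + 1) → ℚ) (j : Fin s) : ℚ :=
  (c j.succ - c j.castSucc) / ((i j.succ : ℚ) - (i j.castSucc : ℚ))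

/-- `(i_0, c_0), …, (i_s, c_s)` are the vertices of the Newton polygon of `f`:
the points `(i_j, c_j)` are among the points `(m, v(a_m))`, the first and last vertices lie
above the trailing and leading coefficients, the slopes of consecutive edges strictly
increase, and every point `(m, v(a_m))` lies on or above (the line spanned by) every edge. -/
structure IsNPVertices (S : Setup K Kbar) (f : K[X]) (s : ℕ)
    (i : Fin (s + 1) → ℕ) (c : Fin (s + 1) → ℚ) : Prop where
  mono : StrictMono i
  first : i 0 = f.natTrailingDegree
  last : i (Fin.last s) = f.natDegree
  vert : ∀ j, S.vK (f.coeff (i j)) = ((c j : ℚ) : WithTop ℚ)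
  slope_mono : StrictMono (NPslope i c)
  support : ∀ (j : Fin s) (m : ℕ) (q : ℚ), S.vK (f.coeff m) = ((q : ℚ) : WithTop ℚ) →
    (c j.succ - c j.castSucc) * ((m : ℚ) - (i j.castSucc : ℚ)) ≤
      (q - c j.castSucc) * ((i j.succ : ℚ) - (i j.castSucc : ℚ))

/-- The valuation ring of `Kbar`. -/
def intRing (S : Setup K Kbar) : Subring Kbar where
  carrier := {x : Kbar | (0 : WithTop ℚ) ≤ S.v x}
  zero_mem' := by
    simp only [Set.mem_setOf_eq, (S.v_top_iff 0).mpr rfl]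
    exact le_top
  one_mem' := by
    simp only [Set.mem_setOf_eq, S.v_one]
    exact le_refl _
  add_mem' := by
    intro a b ha hb
    exact le_trans (le_min ha hb) (S.v_add a b)
  mul_mem' := by
    intro a b ha hb
    simp only [Set.mem_setOf_eq, S.v_mul a b]
    exact add_nonneg ha hb
  neg_mem' := by
    intro a ha
    simpa only [Set.mem_setOf_eq, S.v_neg] using ha

lemma mem_intRing {S : Setup K Kbar} {x : Kbar} :
    x ∈ intRing S ↔ (0 : WithTop ℚ) ≤ S.v x := Iff.rfl

/-- The maximal ideal of the valuation ring of `Kbar`. -/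
def maxIdeal (S : Setup K Kbar) : Ideal (intRing S) where
  carrier := {x : intRing S | (0 : WithTop ℚ) < S.v (x : Kbar)}
  zero_mem' := by
    show (0 : WithTop ℚ) < S.v ((0 : intRing S) : Kbar)
    rw [show ((0 : intRing S) : Kbar) = 0 from rfl, (S.v_top_iff 0).mpr rfl]
    exact zero_lt_top'
  add_mem' := by
    intro a b ha hb
    show (0 : WithTop ℚ) < S.v ((a : Kbar) + (b : Kbar))
    exact lt_of_lt_of_le (lt_min ha hb) (S.v_add _ _)
  smul_mem' := by
    intro c x hx
    show (0 : WithTop ℚ) < S.v ((c : Kbar) * (x : Kbar))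
    rw [S.v_mul]
    exact withTop_add_pos c.2 hx

/-- The residue field of `Kbar`; it is an algebraic closure of the residue field `k` of `K`. -/
abbrev Residue (S : Setup K Kbar) : Type _ := intRing S ⧸ maxIdeal S

/-- Reduction to the residue field (with junk value `0` on non-integral elements). -/
noncomputable def red (S : Setup K Kbar) (x : Kbar) : Residue S :=
  if h : (0 : WithTop ℚ) ≤ S.v x then Ideal.Quotient.mk (maxIdeal S) ⟨x, mem_intRing.mpr h⟩
  else 0

/-- The reduction `f̄|_L` of `f` along the edge `L` of its Newton polygon with endpoints
`(i₁, q₁)` and `(i₂, q₂)`, of slope `ρ = nρ / n` where `n` is the denominator of `ρ`;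
`π` is a uniformiser of `K`.  This is the reduction of `π^{-q₁}·(f|_L)(π^{-nρ}·x)`, where
`f|_L (x) = ∑_j a_{n j + i₁} x^j`. -/
noncomputable def redEdge (S : Setup K Kbar) (π : K) (f : K[X])
    (i₁ i₂ : ℕ) (q₁ nρ : ℤ) (n : ℕ) : Polynomial (Residue S) :=
  ∑ j ∈ Finset.range ((i₂ - i₁) / n + 1),
    Polynomial.C (red S (algebraMap K Kbar (f.coeff (n * j + i₁)) *
      (algebraMap K Kbar π) ^ (-(q₁ + (j : ℤ) * nρ)))) * Polynomial.X ^ j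

/-- `f` is NP-regular (`Δ_v`-regular in dimension 1): for every edge `L` of its Newton
polygon, the reduction `f̄|_L` has no multiple roots in the algebraic closure of the residue
field, i.e. is separable. -/
def NPRegular (S : Setup K Kbar) (π : K) (f : K[X]) : Prop :=
  ∀ (s : ℕ) (i : Fin (s + 1) → ℕ) (c : Fin (s + 1) → ℚ),
    IsNPVertices S f s i c →
    ∀ (j : Fin s) (q₁ nρ : ℤ) (n : ℕ),
      (q₁ : ℚ) = c j.castSucc →
      n = (NPslope i c j).den →
      (nρ : ℚ) = (n : ℚ) * NPslope i c j →
      (redEdge S π f (i j.castSucc) (i j.succ) q₁ nρ n).Separable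

/-- The vertex-index function of the Newton polygon of `f(x+w)`, in terms of the sizes of
the clusters `s_1 ⊂ … ⊂ s_{n+1}` centred at `w`; here `t` is the prescribed first index. -/
def vertIdx {n : ℕ} (t : ℕ) (s : Fin (n + 1) → Finset Kbar) : Fin (n + 2) → ℕ :=
  fun j => Fin.cases (motive := fun _ => ℕ) t (fun j' => (s j').card) j

/-- The vertex-value function of the Newton polygon of `f(x+w)`: the vertex over `|s_j|` has
second coordinate `ε_{s_j} - |s_j|·ρ_{s_j}`; `c0` is the prescribed value at the first vertex. -/
def vertVal {n : ℕ} (c0 : ℚ) (s : Fin (n + 1) → Finset Kbar) (ρ ε : Fin (n + 1) → ℚ) :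
    Fin (n + 2) → ℚ :=
  fun j => Fin.cases (motive := fun _ => ℚ) c0 (fun j' => ε j' - ((s j').card : ℚ) * ρ j') j

/-- Exponential of minus the valuation. -/
noncomputable def expNeg (a : WithTop ℚ) : ℝ :=
  WithTop.recTopCoe (C := fun _ => ℝ) 0 (fun q : ℚ => Real.exp (-(q : ℝ))) a

lemma expNeg_top : expNeg ⊤ = 0 := rfl

lemma expNeg_coe (q : ℚ) : expNeg (q : WithTop ℚ) = Real.exp (-(q : ℝ)) := rfl

lemma expNeg_nonneg (a : WithTop ℚ) : 0 ≤ expNeg a := by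
  induction a using WithTop.recTopCoe with
  | top => exact le_refl _
  | coe q => exact (Real.exp_pos _).le

lemma expNeg_le_iff (a b : WithTop ℚ) : expNeg a ≤ expNeg b ↔ b ≤ a := by
  induction a using WithTop.recTopCoe with
  | top => simp [expNeg_top, expNeg_nonneg]
  | coe q =>
    induction b using WithTop.recTopCoe with
    | top =>
      simp only [expNeg_top, expNeg_coe, top_le_iff, WithTop.coe_ne_top, iff_false, not_le]
      exact Real.exp_pos _
    | coe r =>
      simp [expNeg_coe]

lemma expNeg_inj {a b : WithTop ℚ} (h : expNeg a = expNeg b) : a = b :=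
  le_antisymm ((expNeg_le_iff b a).1 h.ge) ((expNeg_le_iff a b).1 h.le)

lemma expNeg_add (a b : WithTop ℚ) : expNeg (a + b) = expNeg a * expNeg b := by
  induction a using WithTop.recTopCoe with
  | top => simp [expNeg_top]
  | coe q =>
    induction b using WithTop.recTopCoe with
    | top => simp [expNeg_top]
    | coe r =>
      rw [← WithTop.coe_add, expNeg_coe, expNeg_coe, expNeg_coe, ← Real.exp_add]
      push_cast
      congr 1; ring

lemma Setup.v_zero (S : Setup K Kbar) : S.v 0 = ⊤ := (S.v_top_iff 0).2 rfl

/-- The absolute value attached to `S`. -/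
noncomputable def Setup.abv (S : Setup K Kbar) : AbsoluteValue Kbar ℝ where
  toFun x := expNeg (S.v x)
  map_mul' x y := by rw [S.v_mul, expNeg_add]
  nonneg' x := expNeg_nonneg _
  eq_zero' x := by
    constructor
    · intro h
      exact (S.v_top_iff x).1 (expNeg_inj (h.trans expNeg_top.symm))
    · rintro rfl
      rw [S.v_zero, expNeg_top]
  add_le' x y := by
    have h1 := S.v_add x y
    rcases min_le_iff.1 h1 with h | h
    · exact ((expNeg_le_iff _ _).2 h).trans (le_add_of_nonneg_right (expNeg_nonneg _))
    · exact ((expNeg_le_iff _ _).2 h).trans (le_add_of_nonneg_left (expNeg_nonneg _))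

lemma Setup.abv_apply (S : Setup K Kbar) (x : Kbar) : S.abv x = expNeg (S.v x) := rfl

/-- The absolute value on `K`. -/
noncomputable def Setup.abvK (S : Setup K Kbar) : AbsoluteValue K ℝ :=
  S.abv.comp (f := algebraMap K Kbar) (algebraMap K Kbar).injective

lemma Setup.abvK_apply (S : Setup K Kbar) (x : K) :
    S.abvK x = expNeg (S.v (algebraMap K Kbar x)) := rfl

lemma exists_rat_expNeg_lt {ε : ℝ} (hε : 0 < ε) : ∃ q : ℚ, expNeg (q : WithTop ℚ) < ε := by
  obtain ⟨q, hq⟩ := exists_rat_gt (-Real.log ε)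
  refine ⟨q, ?_⟩
  rw [expNeg_coe, ← Real.lt_log_iff_exp_lt hε]
  linarith

/-- Uniqueness of the extension of the valuation: it is Galois invariant. -/
lemma Setup.v_algEquiv (S : Setup K Kbar) (σ : Kbar ≃ₐ[K] Kbar) (x : Kbar) :
    S.v (σ x) = S.v x := by
  have halg := S.algebraic
  let : NormedField K := S.abvK.toNormedField
  have hn : ∀ y : K, ‖y‖ = expNeg (S.v (algebraMap K Kbar y)) := fun y => rfl
  let : NontriviallyNormedField K :=
    { (inferInstance : NormedField K) with
      non_trivial := by
        obtain ⟨π, hπ⟩ := S.exists_uniformiser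
        have hπ1 : ‖π‖ < 1 := by
          rw [hn, hπ, expNeg_coe]; simp
        have hπ0 : 0 < ‖π‖ := by
          rw [hn, hπ, expNeg_coe]; exact Real.exp_pos _
        refine ⟨π⁻¹, ?_⟩
        have : ‖π⁻¹‖ = ‖π‖⁻¹ := norm_inv π
        rw [show ‖π⁻¹‖ = ‖π‖⁻¹ from norm_inv π]
        exact (one_lt_inv₀ hπ0).2 hπ1 }
  have : IsUltrametricDist K := IsUltrametricDist.isUltrametricDist_of_forall_norm_add_le_max_norm (by
    intro a b
    rw [hn, hn, hn, map_add]
    rcases min_le_iff.1 (S.v_add (algebraMap K Kbar a) (algebraMap K Kbar b)) with h | h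
    · exact le_max_of_le_left ((expNeg_le_iff _ _).2 h)
    · exact le_max_of_le_right ((expNeg_le_iff _ _).2 h))
  have : CompleteSpace K := by
    apply Metric.complete_of_cauchySeq_tendsto
    intro u hu
    rw [Metric.cauchySeq_iff] at hu
    obtain ⟨b, hb⟩ := S.complete u (by
      intro q
      obtain ⟨N, hN⟩ := hu (expNeg (q : WithTop ℚ)) (Real.exp_pos _)
      refine ⟨N, fun m hm n hn' => ?_⟩
      have := (hN m hm n hn').le
      rw [dist_eq_norm, hn] at this
      exact (expNeg_le_iff _ _).1 this)
    refine ⟨b, Metric.tendsto_atTop.2 ?_⟩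
    intro ε hε
    obtain ⟨q, hq⟩ := exists_rat_expNeg_lt hε
    obtain ⟨N, hN⟩ := hb q
    refine ⟨N, fun n hn' => ?_⟩
    rw [dist_eq_norm, hn]
    exact ((expNeg_le_iff _ _).2 (hN n hn')).trans_lt hq
  have key : ∀ y : Kbar, S.abv y = spectralNorm K Kbar y :=
    spectralNorm_unique_field_norm_ext (fun y => rfl)
  apply expNeg_inj
  rw [← S.abv_apply, ← S.abv_apply, key, key, ← spectralNorm_eq_of_equiv]

/-- In a perfect field, a polynomial in `X ^ (p ^ k)` has multiplicities divisible by `p ^ k`. -/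
lemma dvd_rootMultiplicity {F : Type*} [Field F] (p k : ℕ) [Fact p.Prime] [CharP F p]
    (hperf : Function.Surjective (fun x : F => x ^ p)) (P : F[X])
    (hP : ∀ i, P.coeff i ≠ 0 → p ^ k ∣ i) (a : F) : p ^ k ∣ P.rootMultiplicity a := by
  have hpos : 0 < p ^ k := pow_pos (Fact.out : p.Prime).pos k
  have hs : Function.Surjective (iterateFrobenius F p k) := by
    rw [coe_iterateFrobenius]
    exact Function.Surjective.iterate hperf k
  have h1 : expand F (p ^ k) (contract (p ^ k) P) = P := by
    ext n
    rw [coeff_expand hpos, coeff_contract hpos.ne']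
    split_ifs with h
    · rw [Nat.div_mul_cancel h]
    · by_contra hc
      exact h (hP n (Ne.symm hc))
  obtain ⟨Q, hQ⟩ := Polynomial.map_surjective _ hs (contract (p ^ k) P)
  have h2 : P = Q ^ (p ^ k) := by
    rw [← h1, ← hQ, ← Polynomial.map_expand, Polynomial.map_iterateFrobenius_expand]
  rw [h2, ← count_roots, roots_pow, Multiset.count_nsmul]
  exact dvd_mul_right _ _

/-- The valuation ring of `Kbar` as a `ValuationSubring`. -/
def valRing (S : Setup K Kbar) : ValuationSubring Kbar where
  toSubring := intRing S
  mem_or_inv_mem' := by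
    intro x
    show (0 : WithTop ℚ) ≤ S.v x ∨ (0 : WithTop ℚ) ≤ S.v x⁻¹
    by_cases hx : x = 0
    · left; rw [hx, S.v_zero]; exact le_top
    · have h := S.v_mul x x⁻¹
      rw [mul_inv_cancel₀ hx, S.v_one] at h
      by_contra hc
      push Not at hc
      have := WithTop.add_lt_add hc.1 hc.2
      rw [← h] at this
      simp at this

lemma mem_valRing {S : Setup K Kbar} {x : Kbar} : x ∈ valRing S ↔ (0 : WithTop ℚ) ≤ S.v x :=
  Iff.rfl

lemma Setup.v_inv_of_zero (S : Setup K Kbar) {x : Kbar} (h : S.v x = 0) : S.v x⁻¹ = 0 := by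
  have hx : x ≠ 0 := by
    rintro rfl
    rw [S.v_zero] at h
    simp at h
  have h1 := S.v_mul x x⁻¹
  rw [mul_inv_cancel₀ hx, S.v_one, h, zero_add] at h1
  exact h1.symm

lemma residue_eq_zero {S : Setup K Kbar} (x : valRing S) :
    IsLocalRing.residue (valRing S) x = 0 ↔ 0 < S.v (x : Kbar) := by
  rw [IsLocalRing.residue_eq_zero_iff, IsLocalRing.mem_maximalIdeal, mem_nonunits_iff]
  have hx : (0 : WithTop ℚ) ≤ S.v (x : Kbar) := x.2
  rw [← not_iff_not, not_not, not_lt]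
  constructor
  · intro h
    obtain ⟨y, hy⟩ := h.exists_right_inv
    have h1 : S.v ((x : Kbar) * (y : Kbar)) = 0 := by
      have : (x : Kbar) * (y : Kbar) = 1 := congrArg Subtype.val hy
      rw [this, S.v_one]
    have hy0 : (0 : WithTop ℚ) ≤ S.v (y : Kbar) := y.2
    rw [S.v_mul] at h1
    rw [← h1]
    exact le_add_of_nonneg_right hy0
  · intro h
    have h0 : S.v (x : Kbar) = 0 := le_antisymm h hx
    have hx0 : (x : Kbar) ≠ 0 := by
      intro hz
      rw [hz, S.v_zero] at h0
      simp at h0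
    refine IsUnit.of_mul_eq_one ⟨(x : Kbar)⁻¹, ?_⟩ ?_
    · rw [mem_valRing, S.v_inv_of_zero h0]
    · apply Subtype.ext
      exact mul_inv_cancel₀ hx0

lemma Setup.v_pow (S : Setup K Kbar) (x : Kbar) (n : ℕ) : S.v (x ^ n) = n • S.v x := by
  induction n with
  | zero => simp [S.v_one]
  | succ n ih => rw [pow_succ, S.v_mul, ih, succ_nsmul]

lemma residue_perfect (S : Setup K Kbar) (p : ℕ) (hp : p.Prime) :
    Function.Surjective (fun x : IsLocalRing.ResidueField (valRing S) => x ^ p) := by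
  intro x
  obtain ⟨y, rfl⟩ := IsLocalRing.residue_surjective x
  have := S.algClosed
  obtain ⟨z, hz⟩ := IsAlgClosed.exists_pow_nat_eq (y : Kbar) hp.pos
  have hy : (0 : WithTop ℚ) ≤ S.v (y : Kbar) := y.2
  have hz0 : z ∈ valRing S := by
    rw [mem_valRing]
    rw [← hz, S.v_pow] at hy
    by_contra hc
    push Not at hc
    lift S.v z to ℚ using ne_top_of_lt hc with q
    have hq : q < 0 := by exact_mod_cast hc
    have h2 : (0 : ℚ) ≤ p • q := by exact_mod_cast hy
    rw [nsmul_eq_mul] at h2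
    have : (0 : ℚ) < p := by exact_mod_cast hp.pos
    nlinarith
  refine ⟨IsLocalRing.residue _ ⟨z, hz0⟩, ?_⟩
  show (IsLocalRing.residue (valRing S) ⟨z, hz0⟩) ^ p = _
  rw [← map_pow]
  congr 1
  exact Subtype.ext hz

lemma residue_charP (S : Setup K Kbar) (p : ℕ) (hp : p.Prime)
    (hres : ((0 : ℚ) : WithTop ℚ) < S.vK (p : K)) :
    CharP (IsLocalRing.ResidueField (valRing S)) p := by
  have h0 : ((p : ℕ) : IsLocalRing.ResidueField (valRing S)) = 0 := by
    rw [← map_natCast (IsLocalRing.residue (valRing S)), residue_eq_zero]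
    have : (((p : valRing S)) : Kbar) = algebraMap K Kbar (p : K) := by simp
    rw [this]
    exact hres
  exact (CharP.charP_iff_prime_eq_zero hp).2 h0

lemma Setup.v_ne_top (S : Setup K Kbar) {x : Kbar} (h : x ≠ 0) : S.v x ≠ ⊤ :=
  fun h' => h ((S.v_top_iff x).1 h')

/-- The set of conjugates of `r0` in the open disc around `r0` of radius `v (r0 - w)` has size
divisible by the `p`-part of the denominator of `v (r0 - w)`. -/
lemma dvd_card_conj (S : Setup K Kbar) (p k : ℕ) (hp : p.Prime)
    (hres : ((0 : ℚ) : WithTop ℚ) < S.vK (p : K)) (r0 : Kbar)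
    (hsep : (minpoly K r0).Separable) (w : K) (ρ : ℚ)
    (hρ : S.v (r0 - algebraMap K Kbar w) = (ρ : WithTop ℚ)) (hk : p ^ k ∣ ρ.den) :
    p ^ k ∣ ((rootFinset (minpoly K r0) : Finset Kbar).filter
      fun r => (ρ : WithTop ℚ) < S.v (r - r0)).card := by
  have := S.algClosed
  have halg := S.algebraic
  have hcl : IsAlgClosure K Kbar := ⟨S.algClosed, halg⟩
  have hnorm : Normal K Kbar := IsAlgClosure.normal K Kbar
  have hF : Fact p.Prime := ⟨hp⟩
  have hchar := residue_charP S p hp hres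
  have hint : IsIntegral K r0 := (halg.isAlgebraic r0).isIntegral
  set u := r0 - algebraMap K Kbar w with hu
  set O : Finset Kbar := rootFinset (minpoly K r0) with hO
  have hu0 : u ≠ 0 := by
    intro h
    rw [h, S.v_zero] at hρ
    simp at hρ
  -- conjugates have the same valuation
  have hconj : ∀ r ∈ O, S.v (r - algebraMap K Kbar w) = (ρ : WithTop ℚ) := by
    intro r hr
    have hr' : aeval r (minpoly K r0) = 0 := by
      rw [hO, rootFinset, Multiset.mem_toFinset, mem_roots', IsRoot.def, eval_map_algebraMap] at hr
      exact hr.2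
    obtain ⟨σ, hσ⟩ := minpoly.exists_algEquiv_of_root' (halg.isAlgebraic r0) hr'
    rw [← hσ, ← hρ, ← S.v_algEquiv σ u, hu, map_sub, σ.commutes]
  have hdivv : ∀ x : Kbar, S.v (x / u) + ρ = S.v x := by
    intro x
    rw [← hρ, ← S.v_mul, div_mul_cancel₀ _ hu0]
  have hquot : ∀ r ∈ O, S.v ((r - algebraMap K Kbar w) / u) = 0 := by
    intro r hr
    have h1 := hdivv (r - algebraMap K Kbar w)
    rw [hconj r hr] at h1
    have hne : S.v ((r - algebraMap K Kbar w) / u) ≠ ⊤ := by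
      intro h; rw [h] at h1; simp at h1
    lift S.v ((r - algebraMap K Kbar w) / u) to ℚ using hne with q
    have : q + ρ = ρ := by exact_mod_cast h1
    have : q = 0 := by linarith
    rw [this]; rfl
  let β : Kbar → valRing S := fun r =>
    if h : (r - algebraMap K Kbar w) / u ∈ valRing S then ⟨_, h⟩ else 0
  have hβ : ∀ r ∈ O, ((β r : valRing S) : Kbar) = (r - algebraMap K Kbar w) / u := by
    intro r hr
    have h : (r - algebraMap K Kbar w) / u ∈ valRing S := by
      rw [mem_valRing, hquot r hr]
    simp only [β, dif_pos h]
  let P : (valRing S)[X] := ∏ r ∈ O, (X - C (β r))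
  -- the shifted minimal polynomial
  let G : K[X] := (minpoly K r0).comp (X + C w)
  have hsplit : (minpoly K r0).map (algebraMap K Kbar) = ∏ r ∈ O, (X - C r) := by
    have hs := (IsAlgClosed.splits ((minpoly K r0).map (algebraMap K Kbar))).eq_prod_roots_of_monic
      ((minpoly.monic hint).map _)
    have hnd : ((minpoly K r0).map (algebraMap K Kbar)).roots.Nodup :=
      nodup_roots hsep.map
    rw [Finset.prod_eq_multiset_prod, hO, rootFinset, Multiset.toFinset_val, hnd.dedup]
    exact hs
  have hG : (G.map (algebraMap K Kbar)).comp (C u * X)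
      = C (u ^ O.card) * P.map (algebraMap (valRing S) Kbar) := by
    simp only [G, P, Polynomial.map_comp, hsplit, Polynomial.map_add, map_X, map_C,
      Polynomial.map_prod, Polynomial.map_sub]
    rw [Polynomial.prod_comp, Polynomial.prod_comp, map_pow, ← Finset.prod_const,
      ← Finset.prod_mul_distrib]
    apply Finset.prod_congr rfl
    intro r hr
    have h1 : algebraMap (valRing S) Kbar (β r) = (r - algebraMap K Kbar w) / u := hβ r hr
    rw [h1, mul_sub, ← C_mul, mul_div_cancel₀ _ hu0]
    simp
    ring
  have hcoef : ∀ i, algebraMap K Kbar (G.coeff i) * u ^ i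
      = u ^ O.card * ((P.coeff i : valRing S) : Kbar) := by
    intro i
    have h := congrArg (fun Q : Kbar[X] => Q.coeff i) hG
    simp only [comp_C_mul_X_coeff, coeff_map, coeff_C_mul] at h
    exact h
  -- integrality
  have hI : ∀ i, S.v ((P.coeff i : valRing S) : Kbar) = 0 →
      ∃ n : ℤ, (n : ℚ) + i * ρ = O.card * ρ := by
    intro i hi
    have h := congrArg S.v (hcoef i)
    rw [S.v_mul, S.v_mul, hi, S.v_pow, S.v_pow, hρ, add_zero] at h
    have hne : G.coeff i ≠ 0 := by
      intro h0
      rw [h0, map_zero, S.v_zero, top_add] at h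
      have : (O.card • (ρ : WithTop ℚ)) = ((O.card • ρ : ℚ) : WithTop ℚ) := by norm_cast
      rw [this] at h
      exact WithTop.coe_ne_top h.symm
    obtain ⟨n, hn⟩ := S.v_base_int _ hne
    rw [hn] at h
    refine ⟨n, ?_⟩
    have h2 : (n : ℚ) + i • ρ = O.card • ρ := by exact_mod_cast h
    simpa [nsmul_eq_mul] using h2
  have hP0 : S.v ((P.coeff 0 : valRing S) : Kbar) = 0 := by
    have h1 : ((P.coeff 0 : valRing S) : Kbar) = ∏ r ∈ O, (-(β r : Kbar)) := by
      rw [coeff_zero_eq_eval_zero]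
      simp [P, eval_prod]
    rw [h1]
    refine Finset.prod_induction _ (fun x => S.v x = 0) ?_ S.v_one ?_
    · intro a b ha hb
      rw [S.v_mul, ha, hb, add_zero]
    · intro r hr
      rw [S.v_neg, hβ r hr, hquot r hr]
  obtain ⟨n0, hn0⟩ := hI 0 hP0
  have hsupp : ∀ i, (P.map (IsLocalRing.residue (valRing S))).coeff i ≠ 0 → p ^ k ∣ i := by
    intro i hi
    rw [coeff_map, Ne, residue_eq_zero] at hi
    have hle : (0 : WithTop ℚ) ≤ S.v ((P.coeff i : valRing S) : Kbar) := (P.coeff i).2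
    obtain ⟨n, hn⟩ := hI i (le_antisymm (not_lt.1 hi) hle)
    have h1 : (i : ℚ) * ρ = ((n0 - n : ℤ) : ℚ) := by
      push_cast at hn0 hn ⊢
      linarith
    have h2 : (i : ℤ) * ρ.num = (n0 - n) * ρ.den := by
      have hd : (ρ.den : ℚ) ≠ 0 := by exact_mod_cast ρ.den_nz
      have h3 : (ρ.num : ℚ) = ρ * ρ.den := (Rat.mul_den_eq_num ρ).symm
      have : ((i : ℤ) : ℚ) * ρ.num = ((n0 - n : ℤ) : ℚ) * ρ.den := by
        rw [h3, ← h1]; push_cast; ring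
      exact_mod_cast this
    have h4 : ρ.den ∣ i := by
      have h5 : (ρ.den : ℤ) ∣ (i : ℤ) * ρ.num := ⟨n0 - n, by rw [h2]; ring⟩
      have h6 : ρ.den ∣ i * ρ.num.natAbs := by
        have := Int.natAbs_dvd_natAbs.2 h5
        simpa [Int.natAbs_mul] using this
      exact (Nat.Coprime.dvd_of_dvd_mul_right ρ.reduced.symm h6)
    exact hk.trans h4
  have hmain := dvd_rootMultiplicity p k (residue_perfect S p hp) _ hsupp 1
  have hcount : (P.map (IsLocalRing.residue (valRing S))).rootMultiplicity 1
      = (O.filter fun r => (ρ : WithTop ℚ) < S.v (r - r0)).card := by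
    have h1 : P.map (IsLocalRing.residue (valRing S))
        = ((O.val.map fun r => IsLocalRing.residue (valRing S) (β r)).map
            fun a => X - C a).prod := by
      simp only [P, Polynomial.map_prod, Polynomial.map_sub, map_X, map_C, Multiset.map_map]
      rfl
    rw [h1, ← count_roots, roots_multiset_prod_X_sub_C, Multiset.count_map]
    rw [← Finset.filter_val, Finset.card_val]
    congr 1
    apply Finset.filter_congr
    intro r hr
    rw [eq_comm, ← sub_eq_zero, ← map_one (IsLocalRing.residue (valRing S)), ← map_sub,
      residue_eq_zero]
    have h2 : ((β r - 1 : valRing S) : Kbar) = (r - r0) / u := by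
      have : ((β r - 1 : valRing S) : Kbar) = (β r : Kbar) - 1 := rfl
      rw [this, hβ r hr, div_sub_one hu0, hu]
      congr 1
      ring
    rw [h2]
    rw [← hdivv (r - r0)]
    cases h : S.v ((r - r0) / u) with
    | top => simp
    | coe q =>
      norm_cast
      constructor <;> intro h <;> linarith
  rw [← hcount]
  exact hmain

lemma Setup.v_sub_comm (S : Setup K Kbar) (x y : Kbar) : S.v (x - y) = S.v (y - x) := by
  rw [← S.v_neg, neg_sub]

/-- Ultrametric inequality in triangle form. -/
lemma Setup.v_tri (S : Setup K Kbar) (x y z : Kbar) :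
    min (S.v (x - y)) (S.v (y - z)) ≤ S.v (x - z) := by
  have := S.v_add (x - y) (y - z)
  rwa [sub_add_sub_cancel] at this

lemma Setup.v_tri_le (S : Setup K Kbar) {x y z : Kbar} {d : WithTop ℚ} (h1 : d ≤ S.v (x - y))
    (h2 : d ≤ S.v (y - z)) : d ≤ S.v (x - z) :=
  (le_min h1 h2).trans (S.v_tri x y z)

lemma Setup.v_tri_lt (S : Setup K Kbar) {x y z : Kbar} {d : WithTop ℚ} (h1 : d < S.v (x - y))
    (h2 : d < S.v (y - z)) : d < S.v (x - z) :=
  (lt_min h1 h2).trans_le (S.v_tri x y z)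

lemma depth_le (S : Setup K Kbar) {s : Finset Kbar} {r r' : Kbar} (hr : r ∈ s) (hr' : r' ∈ s) :
    depth S s ≤ S.v (r - r') :=
  (Finset.inf_le (f := fun r => s.inf fun r' => S.v (r - r')) hr).trans
    (Finset.inf_le (f := fun r' => S.v (r - r')) hr')

lemma mem_rootFinset {f : K[X]} (hf : f ≠ 0) {r : Kbar} :
    r ∈ (rootFinset f : Finset Kbar) ↔ aeval r f = 0 := by
  rw [rootFinset, Multiset.mem_toFinset, mem_roots', IsRoot.def, eval_map_algebraMap]
  exact and_iff_right (Polynomial.map_ne_zero hf)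

/-- **Clusters of non-maximal radius have `p`-power size.** Suppose `Σ_f` is almost rational
and `s` is a proper cluster with `d_s > ρ_s`. Then `|s|` is a power of `p`. -/
theorem card_p_pow_of_almostRational
    (S : Setup K Kbar)
    (p : ℕ) (hp : p.Prime) (hres : ((0 : ℚ) : WithTop ℚ) < S.vK (p : K))
    (f : K[X]) (hsep : f.Separable) (hdeg : 1 ≤ f.natDegree)
    (hAR : AlmostRational S f p)
    (s : Finset Kbar) (hs : IsCluster S f s) (hproper : 1 < s.card)
    (w : K) (hw : IsRationalCentre S s w)
    (hlt : dminK S s w < depth S s) :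
    ∃ m : ℕ, s.card = p ^ m := by
  have hf0 : f ≠ 0 := by
    rintro rfl
    simp at hdeg
  have hcl : IsAlgClosure K Kbar := ⟨S.algClosed, S.algebraic⟩
  have hnorm : Normal K Kbar := IsAlgClosure.normal K Kbar
  have halg := S.algebraic
  set d := depth S s with hd
  obtain ⟨hne, z, δ, hsdef⟩ := hs
  -- the radius
  have hfin : dminK S s w ≠ ⊤ := ne_top_of_lt hlt
  obtain ⟨ρ, hρ⟩ := WithTop.ne_top_iff_exists.1 hfin
  obtain ⟨r0, hr0s, hr0⟩ := Finset.exists_mem_eq_inf s hne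
    (fun r => S.v (r - algebraMap K Kbar w))
  have hr0ρ : S.v (r0 - algebraMap K Kbar w) = (ρ : WithTop ℚ) := by
    rw [hρ]; exact hr0.symm
  rw [← hρ] at hlt
  have hr0R : r0 ∈ (rootFinset f : Finset Kbar) := by
    rw [hsdef] at hr0s
    exact (Finset.mem_filter.1 hr0s).1
  -- `s` is the closed disc of radius `d` around `r0`
  have hδd : (δ : WithTop ℚ) ≤ d := by
    refine Finset.le_inf fun a ha => Finset.le_inf fun b hb => ?_
    rw [hsdef, Finset.mem_filter] at ha hb
    refine S.v_tri_le ha.2 ?_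
    rw [S.v_sub_comm]
    exact hb.2
  have hsball : s = (rootFinset f).filter fun r => d ≤ S.v (r - r0) := by
    ext r
    rw [Finset.mem_filter]
    constructor
    · intro hr
      refine ⟨?_, depth_le S hr hr0s⟩
      rw [hsdef] at hr
      exact (Finset.mem_filter.1 hr).1
    · rintro ⟨h1, h2⟩
      have h3 := hr0s
      rw [hsdef, Finset.mem_filter] at h3 ⊢
      exact ⟨h1, S.v_tri_le (hδd.trans h2) h3.2⟩
  -- the bigger cluster `t`
  set t : Finset Kbar := (rootFinset f).filter fun r => (ρ : WithTop ℚ) < S.v (r - r0) with ht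
  have hmemt : ∀ r, r ∈ t ↔ r ∈ (rootFinset f : Finset Kbar) ∧ (ρ : WithTop ℚ) < S.v (r - r0) := by
    intro r; rw [ht, Finset.mem_filter]
  have hst : s ⊆ t := by
    intro r hr
    rw [hsball, Finset.mem_filter] at hr
    exact (hmemt r).2 ⟨hr.1, hlt.trans_le hr.2⟩
  have hr0t : r0 ∈ t := hst hr0s
  have htcard : 1 < t.card := hproper.trans_le (Finset.card_le_card hst)
  have htv : ∀ r ∈ t, (ρ : WithTop ℚ) ≤ S.v (r - algebraMap K Kbar w) := by
    intro r hr
    exact S.v_tri_le ((hmemt r).1 hr).2.le hr0ρ.ge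
  have htcl : IsCluster S f t := by
    refine ⟨⟨r0, hr0t⟩, r0, ?_⟩
    obtain ⟨r1, hr1t, hr1⟩ := Finset.exists_mem_ne htcard r0
    have hle : t.inf (fun r => S.v (r - r0)) ≤ S.v (r1 - r0) :=
      Finset.inf_le (f := fun r => S.v (r - r0)) hr1t
    have hnt : t.inf (fun r => S.v (r - r0)) ≠ ⊤ := by
      intro h
      rw [h, top_le_iff] at hle
      exact S.v_ne_top (sub_ne_zero.2 hr1) hle
    obtain ⟨ε, hε⟩ := WithTop.ne_top_iff_exists.1 hnt
    refine ⟨ε, ?_⟩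
    obtain ⟨r2, hr2, hr2e⟩ := Finset.exists_mem_eq_inf t ⟨r0, hr0t⟩ (fun r => S.v (r - r0))
    ext r
    refine Iff.trans ?_ Finset.mem_filter.symm
    rw [hε]
    constructor
    · intro hr
      exact ⟨((hmemt r).1 hr).1, Finset.inf_le (f := fun r => S.v (r - r0)) hr⟩
    · rintro ⟨h1, h2⟩
      refine (hmemt r).2 ⟨h1, lt_of_lt_of_le ?_ h2⟩
      rw [hr2e]
      exact ((hmemt r2).1 hr2).2
  have hdt : dminK S t w = (ρ : WithTop ℚ) := by
    apply le_antisymm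
    · rw [← hr0ρ]
      exact Finset.inf_le (f := fun r => S.v (r - algebraMap K Kbar w)) hr0t
    · exact Finset.le_inf htv
  have htw : IsRationalCentre S t w := by
    intro w'
    rw [hdt, hρ]
    exact (Finset.inf_mono hst).trans (hw w')
  have htdepth : (ρ : WithTop ℚ) < depth S t := by
    rw [depth, Finset.lt_inf_iff (WithTop.coe_lt_top ρ)]
    intro a ha
    rw [Finset.lt_inf_iff (WithTop.coe_lt_top ρ)]
    intro b hb
    refine S.v_tri_lt ((hmemt a).1 ha).2 ?_
    rw [S.v_sub_comm]
    exact ((hmemt b).1 hb).2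
  have htle : (t.card : ℚ) ≤ padicNorm p ρ := by
    by_contra hc
    exact htdepth.ne' (hAR t htcl htcard w ρ htw hdt (not_le.1 hc))
  have hF : Fact p.Prime := ⟨hp⟩
  -- the power of `p`
  obtain ⟨k, hkn, hkd⟩ : ∃ k : ℕ, padicNorm p ρ = (p : ℚ) ^ k ∧ p ^ k ∣ ρ.den := by
    have hρ0 : ρ ≠ 0 := by
      rintro rfl
      rw [padicNorm.zero] at htle
      have : (1 : ℚ) < t.card := by exact_mod_cast htcard
      linarith
    have hgt : 1 < padicNorm p ρ := lt_of_lt_of_le (by exact_mod_cast htcard) htle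
    rw [padicNorm.eq_zpow_of_nonzero hρ0] at hgt ⊢
    have hp1 : (1 : ℚ) < p := by exact_mod_cast hp.one_lt
    have hpos : 0 < -padicValRat p ρ := (one_lt_zpow_iff_right₀ hp1).1 hgt
    have hden : p ∣ ρ.den := by
      by_contra hc
      have h1 : padicValNat p ρ.den = 0 := padicValNat.eq_zero_of_not_dvd hc
      rw [padicValRat_def, h1] at hpos
      have : 0 ≤ (padicValInt p ρ.num : ℤ) := Int.natCast_nonneg _
      omega
    have hnum : padicValInt p ρ.num = 0 := by
      apply padicValInt.eq_zero_of_not_dvd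
      intro h
      have h2 : p ∣ ρ.num.natAbs := Int.natCast_dvd.1 h
      have := Nat.dvd_gcd h2 hden
      rw [ρ.reduced.gcd_eq_one] at this
      exact hp.one_lt.ne' (Nat.dvd_one.1 this)
    refine ⟨padicValNat p ρ.den, ?_, pow_padicValNat_dvd⟩
    rw [padicValRat_def, hnum]
    simp
  have htle' : t.card ≤ p ^ k := by
    rw [hkn] at htle
    exact_mod_cast htle
  -- conjugates of `r0`
  have hr0f : aeval r0 f = 0 := (mem_rootFinset hf0).1 hr0R
  have hdvd : minpoly K r0 ∣ f := minpoly.dvd K r0 hr0f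
  have hm0 : minpoly K r0 ≠ 0 := minpoly.ne_zero (halg.isAlgebraic r0).isIntegral
  have hdiv := dvd_card_conj S p k hp hres r0 (hsep.of_dvd hdvd) w ρ hr0ρ hkd
  set T : Finset Kbar := (rootFinset (minpoly K r0)).filter
    fun r => (ρ : WithTop ℚ) < S.v (r - r0) with hT
  have hTt : T ⊆ t := by
    intro r hr
    rw [hT, Finset.mem_filter, mem_rootFinset hm0] at hr
    refine (hmemt r).2 ⟨(mem_rootFinset hf0).2 ?_, hr.2⟩
    obtain ⟨g, hg⟩ := hdvd
    rw [hg, map_mul, hr.1, zero_mul]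
  have hr0T : r0 ∈ T := by
    rw [hT, Finset.mem_filter, mem_rootFinset hm0]
    exact ⟨minpoly.aeval K r0, ((hmemt r0).1 hr0t).2⟩
  have hTge : p ^ k ≤ T.card := Nat.le_of_dvd (Finset.card_pos.2 ⟨r0, hr0T⟩) hdiv
  have hTeq : T = t := Finset.eq_of_subset_of_card_le hTt (htle'.trans hTge)
  have htk : t.card = p ^ k := le_antisymm htle' (hTeq ▸ hTge)
  -- all discs of radius `d` in `t` have the same size
  let B : Kbar → Finset Kbar := fun r => (rootFinset f).filter fun x => d ≤ S.v (x - r)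
  have hB : ∀ r ∈ t, (B r).card = s.card := by
    intro r hr
    rw [← hTeq, hT, Finset.mem_filter, mem_rootFinset hm0] at hr
    obtain ⟨σ, hσ⟩ := minpoly.exists_algEquiv_of_root' (halg.isAlgebraic r0) hr.1
    have himg : ∀ (τ : Kbar ≃ₐ[K] Kbar) (x : Kbar), x ∈ (rootFinset f : Finset Kbar) →
        τ x ∈ (rootFinset f : Finset Kbar) := by
      intro τ x hx
      rw [mem_rootFinset hf0] at hx ⊢
      have := Polynomial.aeval_algHom_apply τ.toAlgHom x f
      rw [hx, map_zero] at this
      exact this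
    symm
    apply Finset.card_bij (fun x _ => σ x)
    · intro x hx
      rw [hsball, Finset.mem_filter] at hx
      refine Finset.mem_filter.2 ⟨himg σ x hx.1, ?_⟩
      rw [← hσ, ← map_sub, S.v_algEquiv]
      exact hx.2
    · intro a _ b _ h
      exact σ.injective h
    · intro y hy
      obtain ⟨hy1, hy2⟩ := Finset.mem_filter.1 hy
      refine ⟨σ.symm y, ?_, σ.apply_symm_apply y⟩
      rw [hsball, Finset.mem_filter]
      refine ⟨himg σ.symm y hy1, ?_⟩
      rw [← S.v_algEquiv σ, map_sub, σ.apply_symm_apply, hσ]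
      exact hy2
  have hself : ∀ r ∈ t, r ∈ B r := by
    intro r hr
    refine Finset.mem_filter.2 ⟨((hmemt r).1 hr).1, ?_⟩
    rw [sub_self, S.v_zero]
    exact le_top
  have hfib : ∀ b ∈ t.image B, (t.filter fun a => B a = b).card = s.card := by
    intro b hb
    obtain ⟨r, hr, rfl⟩ := Finset.mem_image.1 hb
    rw [← hB r hr]
    congr 1
    ext x
    rw [Finset.mem_filter]
    constructor
    · rintro ⟨h1, h2⟩
      rw [← h2]
      exact hself x h1
    · intro hx
      obtain ⟨hx1, hx2⟩ := Finset.mem_filter.1 hx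
      refine ⟨(hmemt x).2 ⟨hx1, S.v_tri_lt (hlt.trans_le hx2) ((hmemt r).1 hr).2⟩, ?_⟩
      apply Finset.filter_congr
      intro y _
      constructor
      · intro h
        exact S.v_tri_le h hx2
      · intro h
        refine S.v_tri_le h ?_
        rw [S.v_sub_comm]
        exact hx2
  have hsum : t.card = (t.image B).card * s.card := by
    rw [Finset.card_eq_sum_card_image B t, Finset.sum_const_nat hfib]
  have hsd : s.card ∣ p ^ k := ⟨(t.image B).card, by rw [← htk, hsum, mul_comm]⟩
  obtain ⟨m, _, hm⟩ := (Nat.dvd_prime_pow hp).1 hsd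
  exact ⟨m, hm⟩

end ClusterPicture
end

section
/- Let w ∈ K and assume R ≠ {w}. Let s_1 ⊊ s_2 ⊊ … ⊊ s_n = R be the clusters in Σ̊_f^w. Then the vertices of NP(f(x+w)) are exactly Q_0, Q_1, …, Q_n, where Q_n = (deg f, v(c_f)); Q_i = (|s_i|, ε_{s_i}^w − |s_i|·ρ_{s_i}^w) for i = 1,…,n−1; Q_0 = (0, ε_{s_1}^w) if f(w) ≠ 0, and Q_0 = (1, ε_{s_1}^w − ρ_{s_1}^w) if f(w) = 0; and for each i = 1,…,n the edge of NP(f(x+w)) joining Q_{i−1} and Q_i has slope −ρ_{s_i}^w. In particular, the edges of NP(f(x+w)) are in bijective correspondence with the clusters in Σ̊_f^w. -/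
open Polynomial
open scoped Classical

namespace ClusterPicture

variable {K Kbar : Type*} [Field K] [Field Kbar] [Algebra K Kbar]

lemma v_add_le (S : Setup K Kbar) {q : WithTop ℚ} {x y : Kbar} (hx : q ≤ S.v x)
    (hy : q ≤ S.v y) : q ≤ S.v (x + y) :=
  le_trans (le_min hx hy) (S.v_add x y)

lemma v_add_lt (S : Setup K Kbar) {q : WithTop ℚ} {x y : Kbar} (hx : q < S.v x)
    (hy : q < S.v y) : q < S.v (x + y) :=
  lt_of_lt_of_le (lt_min hx hy) (S.v_add x y)

lemma v_add_eq (S : Setup K Kbar) {q : WithTop ℚ} {x y : Kbar} (hx : S.v x = q)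
    (hy : q < S.v y) : S.v (x + y) = q := by
  apply le_antisymm
  · by_contra h
    push Not at h
    have h1 := v_add_lt S h (show q < S.v (-y) by rwa [S.v_neg])
    rw [add_neg_cancel_right, hx] at h1
    exact lt_irrefl _ h1
  · exact v_add_le S hx.ge hy.le

lemma v_mul_le (S : Setup K Kbar) {a b c : ℚ} {x y : Kbar} (hx : (a : WithTop ℚ) ≤ S.v x)
    (hy : (b : WithTop ℚ) ≤ S.v y) (h : c ≤ a + b) : (c : WithTop ℚ) ≤ S.v (x * y) := by
  rw [S.v_mul]
  refine le_trans ?_ (add_le_add hx hy)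
  exact_mod_cast h

lemma v_mul_lt (S : Setup K Kbar) {a b c : ℚ} {x y : Kbar} (hx : (a : WithTop ℚ) ≤ S.v x)
    (hy : (b : WithTop ℚ) < S.v y) (h : c ≤ a + b) : (c : WithTop ℚ) < S.v (x * y) := by
  rw [S.v_mul]
  generalize S.v x = p at *
  generalize S.v y = q at *
  induction p using WithTop.recTopCoe with
  | top => simp
  | coe p =>
    induction q using WithTop.recTopCoe with
    | top => simp
    | coe q =>
      norm_cast at *
      linarith

lemma gauss (S : Setup K Kbar) (ρ : ℚ) (z : Kbar) (T : Finset Kbar) :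
    ∃ E : ℚ, (E : WithTop ℚ) = ∑ r ∈ T, min (S.v (r - z)) (ρ : WithTop ℚ) ∧
      (∀ m : ℕ, ((E - m * ρ : ℚ) : WithTop ℚ) ≤
        S.v ((∏ r ∈ T, (X - C (r - z))).coeff m)) ∧
      (∀ m : ℕ, (T.filter fun r => (ρ : WithTop ℚ) ≤ S.v (r - z)).card < m →
        ((E - m * ρ : ℚ) : WithTop ℚ) < S.v ((∏ r ∈ T, (X - C (r - z))).coeff m)) ∧
      S.v ((∏ r ∈ T, (X - C (r - z))).coeff
          (T.filter fun r => (ρ : WithTop ℚ) ≤ S.v (r - z)).card) =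
        ((E - ((T.filter fun r => (ρ : WithTop ℚ) ≤ S.v (r - z)).card : ℕ) * ρ : ℚ) :
          WithTop ℚ) := by
  have v0 : S.v 0 = ⊤ := (S.v_top_iff 0).2 rfl
  induction T using Finset.induction_on with
  | empty =>
    refine ⟨0, by simp, ?_, ?_, ?_⟩
    · intro m
      rcases Nat.eq_zero_or_pos m with h | h
      · subst h; simp [S.v_one]
      · simp [coeff_one, h.ne', v0]
    · intro m h
      simp only [Finset.filter_empty, Finset.card_empty] at h
      rw [Finset.prod_empty, coeff_one, if_neg h.ne', v0]
      exact WithTop.coe_lt_top _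
    · simp [S.v_one]
  | insert a T ha ih =>
    obtain ⟨E, hE, h1, h2, h3⟩ := ih
    rw [Finset.prod_insert ha, Finset.sum_insert ha, Finset.filter_insert, ← hE]
    set P := ∏ r ∈ T, (X - C (r - z)) with hP
    set N := (T.filter fun r => (ρ : WithTop ℚ) ≤ S.v (r - z)).card with hN
    set u := a - z with hu
    have c0 : ((X - C u) * P).coeff 0 = -u * P.coeff 0 := by
      simp [sub_mul]
    have cS : ∀ m, ((X - C u) * P).coeff (m + 1) = P.coeff m + -u * P.coeff (m + 1) := by
      intro m
      rw [sub_mul, coeff_sub, coeff_X_mul, coeff_C_mul]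
      ring
    by_cases hc : (ρ : WithTop ℚ) ≤ S.v u
    · have hc' : (ρ : WithTop ℚ) ≤ S.v (-u) := by rwa [S.v_neg]
      rw [if_pos hc, min_eq_right hc, Finset.card_insert_of_notMem (by simp [ha]), ← hN]
      have key : ∀ m : ℕ, ((ρ + E - (m + 1 : ℕ) * ρ : ℚ) : WithTop ℚ)
          = ((E - m * ρ : ℚ) : WithTop ℚ) := by
        intro m; congr 1; push_cast; ring
      refine ⟨ρ + E, by norm_cast, ?_, ?_, ?_⟩
      · intro m
        cases m with
        | zero => rw [c0]; exact v_mul_le S hc' (h1 0) (by push_cast; linarith)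
        | succ m =>
          rw [cS]
          exact v_add_le S (by rw [key]; exact h1 m)
            (v_mul_le S hc' (h1 (m + 1)) (by linarith))
      · intro m hm
        cases m with
        | zero => omega
        | succ m =>
          rw [cS]
          exact v_add_lt S (by rw [key]; exact h2 m (by omega))
            (v_mul_lt S hc' (h2 (m + 1) (by omega)) (by linarith))
      · rw [cS]
        refine v_add_eq S (by rw [key]; exact h3) ?_
        exact v_mul_lt S hc' (h2 (N + 1) (by omega)) (by linarith)
    · rw [if_neg hc, ← hN]
      push Not at hc
      rw [min_eq_left hc.le]
      obtain ⟨q, hq⟩ := WithTop.ne_top_iff_exists.1 (ne_top_of_lt hc)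
      have hq' : S.v (-u) = (q : WithTop ℚ) := by rw [S.v_neg, hq]
      rw [← hq] at hc ⊢
      have hqρ : q < ρ := by exact_mod_cast hc
      have first : ∀ m : ℕ, ((q + E - (m + 1 : ℕ) * ρ : ℚ) : WithTop ℚ) < S.v (P.coeff m) := by
        intro m
        refine lt_of_lt_of_le ?_ (h1 m)
        norm_cast
        push_cast
        linarith
      refine ⟨q + E, by norm_cast, ?_, ?_, ?_⟩
      · intro m
        cases m with
        | zero => rw [c0]; exact v_mul_le S hq'.ge (h1 0) (by push_cast; linarith)
        | succ m =>
          rw [cS]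
          exact v_add_le S (first m).le (v_mul_le S hq'.ge (h1 (m + 1)) (by linarith))
      · intro m hm
        cases m with
        | zero => omega
        | succ m =>
          rw [cS]
          exact v_add_lt S (first m) (v_mul_lt S hq'.ge (h2 (m + 1) (by omega)) (by linarith))
      · have e : S.v (-u * P.coeff N) = ((q + E - N * ρ : ℚ) : WithTop ℚ) := by
          rw [S.v_mul, hq', h3]
          norm_cast
          ring
        clear_value N
        cases N with
        | zero => rw [c0]; exact e
        | succ N =>
          rw [cS, add_comm]
          exact v_add_eq S e (first N)

lemma map_comp_eq (S : Setup K Kbar) (f : K[X]) (hsep : f.Separable) (w : K) :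
    (f.comp (X + C w)).map (algebraMap K Kbar) =
      C (algebraMap K Kbar f.leadingCoeff) *
        ∏ r ∈ rootFinset f, (X - C (r - algebraMap K Kbar w)) := by
  have := S.algClosed
  have hs := IsAlgClosed.splits (f.map (algebraMap K Kbar))
  have hnd : (f.map (algebraMap K Kbar)).roots.Nodup := nodup_roots hsep.map
  have h := hs.eq_prod_roots
  rw [Polynomial.map_comp, h]
  simp only [leadingCoeff_map, mul_comp, C_comp, rootFinset]
  congr 1
  rw [Finset.prod, Multiset.toFinset_val, hnd.dedup, multiset_prod_comp, Multiset.map_map]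
  congr 1
  refine Multiset.map_congr rfl fun r _ => ?_
  simp
  ring

lemma card_roots' (S : Setup K Kbar) (f : K[X]) (hsep : f.Separable) :
    (rootFinset f : Finset Kbar).card = f.natDegree := by
  have := S.algClosed
  have hs := IsAlgClosed.splits (f.map (algebraMap K Kbar))
  have hnd : (f.map (algebraMap K Kbar)).roots.Nodup := nodup_roots hsep.map
  rw [rootFinset, Multiset.toFinset_card_of_nodup hnd, ← hs.natDegree_eq_card_roots,
    natDegree_map]

lemma gauss_comp (S : Setup K Kbar) (f : K[X]) (hsep : f.Separable) (w : K) (ρ : ℚ) :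
    ∃ E : ℚ, (E : WithTop ℚ) = S.vK f.leadingCoeff +
        ∑ r ∈ rootFinset f, min (S.v (r - algebraMap K Kbar w)) (ρ : WithTop ℚ) ∧
      (∀ m : ℕ, ((E - m * ρ : ℚ) : WithTop ℚ) ≤ S.vK ((f.comp (X + C w)).coeff m)) ∧
      S.vK ((f.comp (X + C w)).coeff ((rootFinset f).filter fun r =>
          (ρ : WithTop ℚ) ≤ S.v (r - algebraMap K Kbar w)).card) =
        ((E - (((rootFinset f).filter fun r =>
          (ρ : WithTop ℚ) ≤ S.v (r - algebraMap K Kbar w)).card : ℕ) * ρ : ℚ) :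
          WithTop ℚ) := by
  have hlc : algebraMap K Kbar f.leadingCoeff ≠ 0 := by
    simpa using hsep.ne_zero
  have hlc' : S.vK f.leadingCoeff ≠ ⊤ := fun h => hlc ((S.v_top_iff _).1 h)
  obtain ⟨q, hq⟩ := WithTop.ne_top_iff_exists.1 hlc'
  obtain ⟨E, hE, h1, -, h3⟩ := gauss S ρ (algebraMap K Kbar w) (rootFinset f)
  have hco : ∀ m, S.vK ((f.comp (X + C w)).coeff m) = q +
      S.v ((∏ r ∈ rootFinset f, (X - C (r - algebraMap K Kbar w))).coeff m) := by
    intro m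
    rw [Setup.vK, ← coeff_map, map_comp_eq S f hsep w, coeff_C_mul, S.v_mul, hq]
    rfl
  refine ⟨q + E, by rw [← hE, ← hq]; norm_cast, ?_, ?_⟩
  · intro m
    rw [hco]
    refine le_trans (le_of_eq ?_) (add_le_add le_rfl (h1 m))
    norm_cast
    ring
  · rw [hco, h3]
    norm_cast
    ring

lemma E_shift (S : Setup K Kbar) (R : Finset Kbar) (z : Kbar) (c : WithTop ℚ)
    (ρ ρ' E E' : ℚ) (hle : ρ' ≤ ρ)
    (hgap : ∀ r ∈ R, S.v (r - z) < ρ → S.v (r - z) ≤ ρ')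
    (hE : (E : WithTop ℚ) = c + ∑ r ∈ R, min (S.v (r - z)) (ρ : WithTop ℚ))
    (hE' : (E' : WithTop ℚ) = c + ∑ r ∈ R, min (S.v (r - z)) (ρ' : WithTop ℚ)) :
    E - ((R.filter fun r => (ρ : WithTop ℚ) ≤ S.v (r - z)).card : ℕ) * ρ =
      E' - ((R.filter fun r => (ρ : WithTop ℚ) ≤ S.v (r - z)).card : ℕ) * ρ' := by
  have key : ∑ r ∈ R, min (S.v (r - z)) (ρ : WithTop ℚ) =
      ∑ r ∈ R, min (S.v (r - z)) (ρ' : WithTop ℚ) +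
        (((R.filter fun r => (ρ : WithTop ℚ) ≤ S.v (r - z)).card * (ρ - ρ') : ℚ) :
          WithTop ℚ) := by
    have : (((R.filter fun r => (ρ : WithTop ℚ) ≤ S.v (r - z)).card * (ρ - ρ') : ℚ) :
          WithTop ℚ) = ∑ r ∈ R, if (ρ : WithTop ℚ) ≤ S.v (r - z) then
            ((ρ - ρ' : ℚ) : WithTop ℚ) else 0 := by
      rw [← Finset.sum_filter, Finset.sum_const, ← nsmul_eq_mul, WithTop.coe_nsmul]
    rw [this, ← Finset.sum_add_distrib]
    refine Finset.sum_congr rfl fun r hr => ?_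
    have hle' : (ρ' : WithTop ℚ) ≤ ρ := by exact_mod_cast hle
    split_ifs with h
    · rw [min_eq_right h, min_eq_right (hle'.trans h)]
      norm_cast
      ring
    · push Not at h
      rw [min_eq_left h.le, min_eq_left (hgap r hr h), add_zero]
  rw [key, ← add_assoc, ← hE'] at hE
  norm_cast at hE
  rw [hE]
  ring

/-- **The Newton polygon of `f(x+w)` from the clusters centred at `w`.** Let `w ∈ K` with
`R ≠ {w}`, and let `s_1 ⊊ … ⊊ s_{n+1} = R` be the clusters in `Σ̊_f^w`, with radii `ρ_j`
and invariants `ε_j`. Then the vertices of `NP(f(x+w))` are exactly `Q_0, …, Q_{n+1}` with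
`Q_j = (|s_j|, ε_j − |s_j|·ρ_j)` for `j ≥ 1` (in particular `Q_{n+1} = (deg f, v(c_f))`),
`Q_0 = (0, ε_1)` if `f(w) ≠ 0` and `Q_0 = (1, ε_1 − ρ_1)` if `f(w) = 0`, and the `j`-th edge
has slope `−ρ_j`. -/
theorem newton_polygon_of_translate_from_clusters
    (S : Setup K Kbar) (f : K[X]) (hsep : f.Separable) (hdeg : 1 ≤ f.natDegree)
    (w : K) (hRw : rootFinset f ≠ ({algebraMap K Kbar w} : Finset Kbar))
    (n : ℕ) (s : Fin (n + 1) → Finset Kbar)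
    (hmono : StrictMono s)
    (hmem : ∀ j, IsClusterCentredAt S f w (s j) ∧ s j ≠ ({algebraMap K Kbar w} : Finset Kbar))
    (hlastR : s (Fin.last n) = rootFinset f)
    (hexh : ∀ t : Finset Kbar, IsClusterCentredAt S f w t →
      t ≠ ({algebraMap K Kbar w} : Finset Kbar) → ∃ j, t = s j)
    (ρ ε : Fin (n + 1) → ℚ)
    (hρ : ∀ j, dminK S (s j) w = ((ρ j : ℚ) : WithTop ℚ))
    (hε : ∀ j, ((ε j : ℚ) : WithTop ℚ) =
      S.vK f.leadingCoeff +
        ∑ r ∈ rootFinset f, min (S.v (r - algebraMap K Kbar w)) ((ρ j : ℚ) : WithTop ℚ)) :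
    IsNPVertices S (f.comp (Polynomial.X + Polynomial.C w)) (n + 1)
      (vertIdx (if f.eval w = 0 then 1 else 0) s)
      (vertVal (if f.eval w = 0 then ε 0 - ρ 0 else ε 0) s ρ ε) ∧
    (∀ j : Fin (n + 1),
      NPslope (vertIdx (if f.eval w = 0 then 1 else 0) s)
        (vertVal (if f.eval w = 0 then ε 0 - ρ 0 else ε 0) s ρ ε) j = -(ρ j)) ∧
    (s (Fin.last n)).card = f.natDegree ∧
    ((ε (Fin.last n) - ((s (Fin.last n)).card : ℚ) * ρ (Fin.last n) : ℚ) : WithTop ℚ) =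
      S.vK f.leadingCoeff := by
  set a : Kbar := algebraMap K Kbar w with ha
  have v0 : S.v 0 = ⊤ := (S.v_top_iff 0).2 rfl
  have hf0 : f ≠ 0 := hsep.ne_zero
  have haR : a ∈ rootFinset f ↔ f.eval w = 0 := by
    rw [rootFinset, Multiset.mem_toFinset, mem_roots (by simpa using hf0), IsRoot, ha,
      eval_map_apply]
    simp
  -- description of the clusters
  have hsR : ∀ j, s j = (rootFinset f).filter fun r => (ρ j : WithTop ℚ) ≤ S.v (r - a) := by
    intro j
    obtain ⟨⟨-, δ, hδ⟩, -⟩ := hmem j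
    have h1 : ∀ r ∈ s j, (ρ j : WithTop ℚ) ≤ S.v (r - a) := by
      intro r hr
      rw [← hρ j]
      exact Finset.inf_le hr
    have h2 : (δ : WithTop ℚ) ≤ ρ j := by
      rw [← hρ j]
      refine Finset.le_inf fun r hr => ?_
      rw [hδ] at hr
      exact (Finset.mem_filter.1 hr).2
    ext r
    rw [Finset.mem_filter]
    constructor
    · intro hr
      refine ⟨?_, h1 r hr⟩
      rw [hδ] at hr
      exact (Finset.mem_filter.1 hr).1
    · rintro ⟨hr, hr'⟩
      rw [hδ]
      exact Finset.mem_filter.2 ⟨hr, h2.trans hr'⟩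
  have hmem_s : ∀ j r, r ∈ s j ↔ r ∈ rootFinset f ∧ (ρ j : WithTop ℚ) ≤ S.v (r - a) := by
    intro j r
    rw [hsR j, Finset.mem_filter]
  have hlt_of : ∀ i j, ρ j < ρ i → i < j := by
    intro i j h
    by_contra hij
    push Not at hij
    have hsub : s j ≤ s i := hmono.monotone hij
    have : (ρ i : WithTop ℚ) ≤ ρ j := by
      rw [← hρ i, ← hρ j]
      exact Finset.inf_mono hsub
    have : ρ i ≤ ρ j := by exact_mod_cast this
    linarith
  have hanti : StrictAnti ρ := by
    intro i j hij
    rcases lt_trichotomy (ρ j) (ρ i) with h | h | h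
    · exact h
    · exfalso
      have : s i = s j := by rw [hsR i, hsR j, h]
      exact (hmono hij).ne this
    · exact absurd (hlt_of j i h) (not_lt.2 hij.le)
  -- the gap property
  have hgap : ∀ j r, r ∈ rootFinset f → r ≠ a → (ρ j : WithTop ℚ) < S.v (r - a) →
      ∃ i, i < j ∧ r ∈ s i := by
    intro j r hr hra hlt
    have hne : S.v (r - a) ≠ ⊤ := fun h => hra (sub_eq_zero.1 ((S.v_top_iff _).1 h))
    obtain ⟨q, hq⟩ := WithTop.ne_top_iff_exists.1 hne
    set t := (rootFinset f).filter fun r => (q : WithTop ℚ) ≤ S.v (r - a) with ht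
    have hrt : r ∈ t := Finset.mem_filter.2 ⟨hr, hq.le⟩
    obtain ⟨i, hi⟩ := hexh t ⟨⟨r, hrt⟩, q, ht⟩ (by
      intro h
      rw [h, Finset.mem_singleton] at hrt
      exact hra hrt)
    refine ⟨i, hlt_of i j ?_, hi ▸ hrt⟩
    have h1 : (q : WithTop ℚ) ≤ ρ i := by
      rw [← hρ i, ← hi]
      exact Finset.le_inf fun r' hr' => (Finset.mem_filter.1 hr').2
    rw [← hq] at hlt
    exact_mod_cast lt_of_lt_of_le hlt h1
  -- coefficient valuations
  have hco : ∀ j, (∀ m : ℕ, ((ε j - m * ρ j : ℚ) : WithTop ℚ) ≤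
      S.vK ((f.comp (X + C w)).coeff m)) ∧
      S.vK ((f.comp (X + C w)).coeff (s j).card) =
        ((ε j - ((s j).card : ℕ) * ρ j : ℚ) : WithTop ℚ) := by
    intro j
    obtain ⟨E, hE, h1, h2⟩ := gauss_comp S f hsep w (ρ j)
    have hEε : E = ε j := by
      have := hE.trans (hε j).symm
      exact_mod_cast this
    subst hEε
    rw [← ha, ← hsR j] at h2
    exact ⟨h1, h2⟩
  set t : ℕ := if f.eval w = 0 then 1 else 0 with ht
  have hc0 : (if f.eval w = 0 then ε 0 - ρ 0 else ε 0) = ε 0 - t * ρ 0 := by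
    rw [ht]; split_ifs <;> simp
  rw [hc0]
  -- the first vertex, through a large radius
  obtain ⟨B, hB0, hB⟩ : ∃ B : ℚ, ρ 0 ≤ B ∧
      ∀ r ∈ rootFinset f, r ≠ a → S.v (r - a) < B := by
    refine ⟨(∑ r ∈ rootFinset f, |(S.v (r - a)).untopD 0|) + |ρ 0| + 1, ?_, ?_⟩
    · have : 0 ≤ ∑ r ∈ rootFinset f, |(S.v (r - a)).untopD 0| :=
        Finset.sum_nonneg fun _ _ => abs_nonneg _
      have := le_abs_self (ρ 0)
      linarith
    · intro r hr hra
      have hne : S.v (r - a) ≠ ⊤ := fun h => hra (sub_eq_zero.1 ((S.v_top_iff _).1 h))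
      obtain ⟨q, hq⟩ := WithTop.ne_top_iff_exists.1 hne
      have h1 := Finset.single_le_sum (f := fun r => |(S.v (r - a)).untopD 0|)
        (fun _ _ => abs_nonneg _) hr
      simp only [← hq, WithTop.untopD_coe] at h1
      rw [← hq, WithTop.coe_lt_coe]
      have := le_abs_self q
      have := abs_nonneg (ρ 0)
      linarith
  have hcardB : ((rootFinset f).filter fun r => (B : WithTop ℚ) ≤ S.v (r - a)).card = t := by
    by_cases h : f.eval w = 0
    · rw [ht, if_pos h, Finset.card_eq_one]
      refine ⟨a, ?_⟩
      ext r
      rw [Finset.mem_filter, Finset.mem_singleton]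
      constructor
      · rintro ⟨hr, hr'⟩
        by_contra hra
        exact absurd (hB r hr hra) (not_lt.2 hr')
      · rintro rfl
        refine ⟨haR.2 h, ?_⟩
        rw [sub_self, v0]
        exact le_top
    · rw [ht, if_neg h, Finset.card_eq_zero, Finset.filter_eq_empty_iff]
      intro r hr
      refine not_le.2 (hB r hr ?_)
      rintro rfl
      exact h (haR.1 hr)
  have hvert0 : S.vK ((f.comp (X + C w)).coeff t) = ((ε 0 - t * ρ 0 : ℚ) : WithTop ℚ) := by
    obtain ⟨E, hE, -, h2⟩ := gauss_comp S f hsep w B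
    have h3 := E_shift S (rootFinset f) a _ B (ρ 0) E (ε 0) hB0 (by
      intro r hr hrB
      by_contra hlt
      push Not at hlt
      have hra : r ≠ a := by
        rintro rfl
        rw [sub_self, v0] at hrB
        exact absurd hrB not_top_lt
      obtain ⟨i, hi, -⟩ := hgap 0 r hr hra hlt
      exact absurd hi (Fin.not_lt_zero i)) hE (hε 0)
    rw [← ha, h3, hcardB] at h2
    exact h2
  have hcast : ∀ j : Fin (n + 1), vertVal (ε 0 - t * ρ 0) s ρ ε j.castSucc =
      ε j - (vertIdx t s j.castSucc : ℕ) * ρ j := by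
    intro j
    refine Fin.cases ?_ (fun i => ?_) j
    · simp [vertVal, vertIdx]
    · have h3 := E_shift S (rootFinset f) a _ (ρ i.castSucc) (ρ i.succ) (ε i.castSucc)
        (ε i.succ) (hanti (Fin.castSucc_lt_succ (i := i))).le (by
          intro r hr hrB
          by_contra hlt
          push Not at hlt
          have hra : r ≠ a := by
            rintro rfl
            rw [sub_self, v0] at hrB
            exact absurd hrB not_top_lt
          obtain ⟨k, hk, hrk⟩ := hgap i.succ r hr hra hlt
          have hki : k ≤ i.castSucc := Fin.le_castSucc_iff.2 hk
          have := (hmem_s _ _).1 (hmono.monotone hki hrk)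
          exact absurd hrB (not_lt.2 this.2)) (hε _) (hε _)
      rw [← hsR] at h3
      exact h3
  have hsucc : ∀ j : Fin (n + 1), vertVal (ε 0 - t * ρ 0) s ρ ε j.succ =
      ε j - (vertIdx t s j.succ : ℕ) * ρ j := by
    intro j
    simp [vertVal, vertIdx]
  have hidx : StrictMono (vertIdx t s) := by
    rw [Fin.strictMono_iff_lt_succ]
    intro j
    refine Fin.cases ?_ (fun i => ?_) j
    · show t < (s 0).card
      have hne := (hmem 0).1.1
      by_cases h : f.eval w = 0
      · rw [ht, if_pos h]
        have ha0 : a ∈ s 0 := by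
          rw [hmem_s, sub_self, v0]
          exact ⟨haR.2 h, le_top⟩
        by_contra hle
        push Not at hle
        apply (hmem 0).2
        symm
        exact Finset.eq_of_subset_of_card_le (Finset.singleton_subset_iff.2 ha0) (by simpa using hle)
      · rw [ht, if_neg h]
        exact hne.card_pos
    · exact Finset.card_lt_card (hmono (Fin.castSucc_lt_succ (i := i)))
  have hidx' : ∀ j : Fin (n + 1), (0 : ℚ) <
      (vertIdx t s j.succ : ℚ) - (vertIdx t s j.castSucc : ℚ) := by
    intro j
    have := hidx (Fin.castSucc_lt_succ (i := j))
    have : (vertIdx t s j.castSucc : ℚ) < (vertIdx t s j.succ : ℚ) := by exact_mod_cast this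
    linarith
  have hslope : ∀ j : Fin (n + 1),
      NPslope (vertIdx t s) (vertVal (ε 0 - t * ρ 0) s ρ ε) j = -(ρ j) := by
    intro j
    rw [NPslope, hcast, hsucc, div_eq_iff (hidx' j).ne']
    ring
  have hcard : (s (Fin.last n)).card = f.natDegree := by
    rw [hlastR]
    exact card_roots' S f hsep
  have hnd : (f.comp (X + C w)).natDegree = f.natDegree := by
    rw [natDegree_comp, natDegree_X_add_C, mul_one]
  refine ⟨⟨hidx, ?_, ?_, ?_, ?_, ?_⟩, hslope, hcard, ?_⟩
  · show t = _
    have hne : (f.comp (X + C w)).coeff t ≠ 0 := by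
      intro h
      rw [h, Setup.vK, map_zero, v0] at hvert0
      exact WithTop.coe_ne_top hvert0.symm
    refine le_antisymm ?_ (natTrailingDegree_le_of_ne_zero hne)
    by_cases h : f.eval w = 0
    · rw [ht, if_pos h, Nat.one_le_iff_ne_zero]
      intro h0
      have hg : f.comp (X + C w) ≠ 0 := fun h' => hne (by rw [h', coeff_zero])
      apply (mt trailingCoeff_eq_zero.1 hg)
      rw [trailingCoeff, h0, coeff_zero_eq_eval_zero, eval_comp]
      simpa using h
    · rw [ht, if_neg h]
      exact Nat.zero_le _
  · rw [hnd, ← hcard]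
    rfl
  · intro j
    refine Fin.cases ?_ (fun i => ?_) j
    · exact hvert0
    · exact (hco i).2
  · intro i j hij
    rw [hslope, hslope]
    exact neg_lt_neg (hanti hij)
  · intro j m q hq
    have h1 := (hco j).1 m
    rw [hq, WithTop.coe_le_coe] at h1
    rw [hcast, hsucc]
    nlinarith [hidx' j, mul_nonneg (hidx' j).le (sub_nonneg.2 h1)]
  · rw [← (hco (Fin.last n)).2, hcard, ← hnd, coeff_natDegree, leadingCoeff_comp]
    · simp
    · simp

end ClusterPicture
end

section
/- Let F/K be a finite Galois extension, where K is a complete discretely valued field, and let O_K ⊆ O_F be the rings of integers of K and F. Let M be a flat O_K-module and let M_F = M ⊗_{O_K} O_F, on which Gal(F/K) acts O_K-linearly through the second factor. Then the natural map M → M_F, m ↦ m ⊗ 1, is injective and induces an isomorphism of O_K-modules M ≅ (M_F)^{Gal(F/K)} = {m ∈ M_F : σ(m) = m for every σ ∈ Gal(F/K)}. -/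
open scoped TensorProduct

/-- **Galois fixed points of flat modules under base extension.** Let `F/K` be a finite
Galois extension, where `K` is a complete discretely valued field (with valuation `v`), and
let `O_K ⊆ O_F` be the rings of integers (`A` with fraction field `K` consisting of the
`v`-integral elements, and `B` the integral closure of `A` in `F`). Let `M` be a flat
`O_K`-module and `M_F = M ⊗_{O_K} O_F`, with `Gal(F/K)` acting through the second factor
(via `galRestrict`). Then the natural map `M → M_F`, `m ↦ m ⊗ 1`, is injective with image
exactly the `Gal(F/K)`-fixed points, i.e. it induces `M ≅ (M_F)^{Gal(F/K)}`. -/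
theorem flat_module_galois_fixed_points
    (K : Type*) [Field K] (v : K → WithTop ℤ)
    (hv_top : ∀ x : K, v x = ⊤ ↔ x = 0)
    (hv_one : v 1 = 0)
    (hv_mul : ∀ x y : K, v (x * y) = v x + v y)
    (hv_add : ∀ x y : K, min (v x) (v y) ≤ v (x + y))
    (hv_surj : ∀ n : ℤ, ∃ x : K, v x = (n : WithTop ℤ))
    (hcomplete : ∀ a : ℕ → K,
      (∀ q : ℤ, ∃ N : ℕ, ∀ m, N ≤ m → ∀ n, N ≤ n → ((q : ℤ) : WithTop ℤ) ≤ v (a m - a n)) →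
      ∃ b : K, ∀ q : ℤ, ∃ N : ℕ, ∀ n, N ≤ n → ((q : ℤ) : WithTop ℤ) ≤ v (a n - b))
    (F : Type*) [Field F] [Algebra K F] [FiniteDimensional K F] [IsGalois K F]
    (A : Type*) [CommRing A] [Algebra A K] [IsFractionRing A K]
    (hA : ∀ x : K, ((0 : WithTop ℤ) ≤ v x ↔ ∃ a : A, algebraMap A K a = x))
    (B : Type*) [CommRing B] [Algebra A B] [Algebra B F] [Algebra A F]
    [IsScalarTower A B F] [IsScalarTower A K F] [IsIntegralClosure B A F]
    (M : Type*) [AddCommGroup M] [Module A M] [Module.Flat A M] :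
    Function.Injective (fun m : M => (m ⊗ₜ[A] (1 : B) : M ⊗[A] B)) ∧
    (Set.range fun m : M => (m ⊗ₜ[A] (1 : B) : M ⊗[A] B)) =
      {x : M ⊗[A] B | ∀ σ : F ≃ₐ[K] F,
        LinearMap.lTensor M ((galRestrict A K F B σ).toAlgHom.toLinearMap) x = x} := by
  classical
  have : IsDomain A := (IsFractionRing.injective A K).isDomain (algebraMap A K)
  have : ValuationRing A := by
    rw [ValuationRing.iff_isInteger_or_isInteger A K]
    intro x
    by_cases hx : x = 0
    · left
      exact ⟨0, by simp [hx]⟩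
    · by_cases h : (0 : WithTop ℤ) ≤ v x
      · left
        obtain ⟨a, ha⟩ := (hA x).1 h
        exact ⟨a, ha⟩
      · right
        have h1 : v x + v x⁻¹ = 0 := by rw [← hv_mul, mul_inv_cancel₀ hx, hv_one]
        have h2 : (0 : WithTop ℤ) ≤ v x⁻¹ := by
          by_contra h3
          push Not at h h3
          have := WithTop.add_lt_add h h3
          rw [h1] at this
          simp at this
        obtain ⟨a, ha⟩ := (hA _).1 h2
        exact ⟨a, ha⟩
  have : IsIntegrallyClosed A := inferInstance
  have hBF : Function.Injective (algebraMap B F) := IsIntegralClosure.algebraMap_injective B A F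
  have hAF : Function.Injective (algebraMap A F) := by
    rw [IsScalarTower.algebraMap_eq A K F]
    exact (algebraMap K F).injective.comp (IsFractionRing.injective A K)
  have hAB : Function.Injective (Algebra.linearMap A B) := by
    intro a b h
    apply hAF
    rw [IsScalarTower.algebraMap_apply A B F, IsScalarTower.algebraMap_apply A B F]
    exact congrArg _ h
  let d : (F ≃ₐ[K] F) → (B →ₗ[A] B) := fun σ =>
    (galRestrict A K F B σ).toAlgHom.toLinearMap - LinearMap.id
  have hex : Function.Exact (Algebra.linearMap A B) (LinearMap.pi d) := by
    intro b
    constructor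
    · intro hb
      have hfix : ∀ σ : F ≃ₐ[K] F, σ (algebraMap B F b) = algebraMap B F b := by
        intro σ
        have h1 : (galRestrict A K F B σ) b - b = 0 := congrFun hb σ
        rw [← algebraMap_galRestrict_apply A σ b, sub_eq_zero.1 h1]
      obtain ⟨k, hk⟩ := (IsGalois.mem_range_algebraMap_iff_fixed (F := K) (algebraMap B F b)).2 hfix
      have hint : IsIntegral A k := by
        have h2 : IsIntegral A (algebraMap K F k) := by
          rw [hk]
          exact (IsIntegralClosure.isIntegral A F b).algebraMap
        exact (isIntegral_algebraMap_iff (algebraMap K F).injective).1 h2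
      obtain ⟨a, ha⟩ := IsIntegrallyClosed.isIntegral_iff.1 hint
      refine ⟨a, hBF ?_⟩
      rw [Algebra.linearMap_apply, ← IsScalarTower.algebraMap_apply A B F,
        IsScalarTower.algebraMap_apply A K F, ha, hk]
    · rintro ⟨a, rfl⟩
      funext σ
      change (galRestrict A K F B σ) (algebraMap A B a) - algebraMap A B a = 0
      rw [AlgEquiv.commutes, sub_self]
  have hf : ∀ m : M, (m ⊗ₜ[A] (1 : B) : M ⊗[A] B) =
      LinearMap.lTensor M (Algebra.linearMap A B) ((TensorProduct.rid A M).symm m) := by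
    intro m
    simp
  have hpi : ∀ (x : M ⊗[A] B) (σ : F ≃ₐ[K] F),
      TensorProduct.piRight A A M (fun _ : F ≃ₐ[K] F => B)
        (LinearMap.lTensor M (LinearMap.pi d) x) σ = LinearMap.lTensor M (d σ) x := by
    intro x σ
    induction x with
    | zero => simp
    | tmul m b => simp
    | add x y hx hy => simp only [map_add, Pi.add_apply, hx, hy]
  have hexM := Module.Flat.lTensor_exact M hex
  refine ⟨?_, ?_⟩
  · intro m n h
    simp only [hf] at h
    exact (TensorProduct.rid A M).symm.injective
      (Module.Flat.lTensor_preserves_injective_linearMap _ hAB h)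
  · ext x
    simp only [Set.mem_range, Set.mem_ofPred_eq]
    have key : (∀ σ : F ≃ₐ[K] F,
        LinearMap.lTensor M ((galRestrict A K F B σ).toAlgHom.toLinearMap) x = x) ↔
        LinearMap.lTensor M (LinearMap.pi d) x = 0 := by
      rw [← (TensorProduct.piRight A A M (fun _ : F ≃ₐ[K] F => B)).map_eq_zero_iff, funext_iff]
      refine forall_congr' fun σ => ?_
      rw [hpi, Pi.zero_apply, LinearMap.lTensor_sub, LinearMap.sub_apply, LinearMap.lTensor_id,
        LinearMap.id_apply, sub_eq_zero]
    rw [key, hexM x]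
    constructor
    · rintro ⟨m, rfl⟩
      exact ⟨_, (hf m).symm⟩
    · rintro ⟨y, rfl⟩
      exact ⟨TensorProduct.rid A M y, by rw [hf, LinearEquiv.symm_apply_apply]⟩
end
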